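/- Let X be a compact connected doubling metric space satisfying the UWS condition with constant C. Then there exists a function C' : (0,1) → ℝ₊ such that for every x ∈ X and all radii 0 < s < r ≤ diam X, there is a finite set P ⊂ B(x,r) of cardinality at most C'(s/r) such that no connected component of X \ P intersects both B(x,s) and X \ closure(B(x,r)). -/

import Mathlib

open Metric Set Filter
open scoped ENNReal NNReal

/-- A metric space is doubling with constant `N` if every ball can be covered
by at most `N` balls of half the radius. -/
def DoublingWith (X : Type*) [PseudoMetricSpace X] (N : ℕ) : Prop :=
  ∀ (x : X) (r : ℝ), ∃ F : Finset X,
    F.card ≤ N ∧ Metric.ball x r ⊆ ⋃ y ∈ F, Metric.ball y (r / 2)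

/-- A metric space is doubling if some doubling constant works. -/
def Doubling (X : Type*) [PseudoMetricSpace X] : Prop :=
  ∃ N : ℕ, DoublingWith X N

/-- A metric space is linearly connected (bounded turning) if any two points are
contained in a continuum of diameter comparable to their distance. -/
def LinearlyConnected (X : Type*) [MetricSpace X] : Prop :=
  ∃ C : ℝ, 1 ≤ C ∧ ∀ x y : X, ∃ J : Set X,
    IsCompact J ∧ IsPreconnected J ∧ x ∈ J ∧ y ∈ J ∧ Metric.diam J ≤ C * dist x y

/-- The UWS condition with constant `C`: for every `x` and `r > 0` there is a finite set
`P ⊆ B(x,r)` of cardinality at most `C` so that no connected component of `X \ P`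
meets both `B(x, r/2)` and `X \ closure (B(x,r))`. -/
def UWSWith (X : Type*) [MetricSpace X] (C : ℝ) : Prop :=
  ∀ (x : X) (r : ℝ), 0 < r → ∃ P : Finset X,
    (P : Set X) ⊆ Metric.ball x r ∧ (P.card : ℝ) ≤ C ∧
    ∀ y : X, y ∉ P →
      ¬ ((connectedComponentIn ((P : Set X))ᶜ y ∩ Metric.ball x (r / 2)).Nonempty ∧
         (connectedComponentIn ((P : Set X))ᶜ y ∩ (closure (Metric.ball x r))ᶜ).Nonempty)

/-- Uniformly well spread local cut points. -/
def UWS (X : Type*) [MetricSpace X] : Prop :=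
  ∃ C : ℝ, 1 ≤ C ∧ UWSWith X C

/-- The WS (well spread local cut points) condition: there are finite sets `Pₙ`
such that the supremum of the diameters of the connected components of `X \ Pₙ`
tends to `0`. -/
def WS (X : Type*) [MetricSpace X] : Prop :=
  ∃ P : ℕ → Finset X,
    Filter.Tendsto
      (fun n => ⨆ y : X, Metric.diam (connectedComponentIn (((P n : Set X))ᶜ) y))
      Filter.atTop (nhds 0)

/-- A point `x` is a local cut point if some connected open set `U` containing `x`
is disconnected by removing `x`. -/
def LocalCutPoint {X : Type*} [MetricSpace X] (x : X) : Prop :=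
  ∃ U : Set X, IsOpen U ∧ IsPreconnected U ∧ x ∈ U ∧ ¬ IsPreconnected (U \ {x})

/-- The distance function of an explicitly given metric structure. -/
noncomputable def mdist {X : Type*} (m : MetricSpace X) (x y : X) : ℝ :=
  @dist X m.toPseudoMetricSpace.toDist x y

/-- A metric structure `m` on `X` is Ahlfors regular of dimension `α` if there is a
Radon measure giving every ball of radius `0 < r ≤ diam X` measure comparable to `r ^ α`. -/
def AhlforsRegularWith {X : Type*} (m : MetricSpace X) (α : ℝ) : Prop :=
  letI := m
  letI : MeasurableSpace X := borel X
  letI : BorelSpace X := ⟨rfl⟩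
  0 < α ∧ ∃ (μ : MeasureTheory.Measure X) (K : ℝ), 1 ≤ K ∧ μ ≠ 0 ∧ μ.Regular ∧
    ∀ (x : X) (r : ℝ), 0 < r → r ≤ Metric.diam (Set.univ : Set X) →
      ENNReal.ofReal (r ^ α / K) ≤ μ (Metric.ball x r) ∧
      μ (Metric.ball x r) ≤ ENNReal.ofReal (K * r ^ α)

/-- Two metric structures on `X` are quasisymmetrically equivalent if there is an
increasing homeomorphism `η` of `ℝ₊` controlling all ratios of distances. -/
def QuasisymmetricEquiv {X : Type*} (m₁ m₂ : MetricSpace X) : Prop :=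
  ∃ η : NNReal → NNReal, StrictMono η ∧ Continuous η ∧ Function.Surjective η ∧
    ∀ x y a : X, x ≠ y → x ≠ a → y ≠ a →
      (mdist m₂ x a).toNNReal / (mdist m₂ y a).toNNReal ≤
        η ((mdist m₁ x a).toNNReal / (mdist m₁ y a).toNNReal)

/-- Hausdorff dimension of `X` with respect to an explicitly given metric structure. -/
noncomputable def mDimH {X : Type*} (m : MetricSpace X) : ℝ≥0∞ :=
  @dimH X (@MetricSpace.toEMetricSpace X m) Set.univ

/-- The Ahlfors regular conformal dimension: the infimum of Hausdorff dimensions over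
all Ahlfors regular metrics quasisymmetrically equivalent to the given one. -/
noncomputable def ARConfDim (X : Type*) (m : MetricSpace X) : ℝ≥0∞ :=
  ⨅ (m' : MetricSpace X)
    (_ : QuasisymmetricEquiv m m' ∧ ∃ α : ℝ, AhlforsRegularWith m' α), mDimH m'

/-- Iterated doubling: a ball of radius `r` is covered by `N ^ k` balls of radius `r / 2 ^ k`. -/
theorem DoublingWith.exists_cover_pow {X : Type*} [PseudoMetricSpace X] {N : ℕ}
    (h : DoublingWith X N) (x : X) (r : ℝ) (k : ℕ) :
    ∃ F : Finset X, F.card ≤ N ^ k ∧ ball x r ⊆ ⋃ y ∈ F, ball y (r / 2 ^ k) := by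
  classical
  induction k with
  | zero => exact ⟨{x}, by simp, by simp⟩
  | succ k ih =>
    obtain ⟨F, hF, hcov⟩ := ih
    choose G hG hGcov using fun y => h y (r / 2 ^ k)
    refine ⟨F.biUnion G, ?_, fun z hz => ?_⟩
    · calc (F.biUnion G).card ≤ F.card * N := Finset.card_biUnion_le_card_mul _ _ _ fun y _ => hG y
        _ ≤ N ^ k * N := by gcongr
        _ = N ^ (k + 1) := (pow_succ _ _).symm
    · obtain ⟨y, hy, hzy⟩ := mem_iUnion₂.1 (hcov hz)
      obtain ⟨w, hw, hzw⟩ := mem_iUnion₂.1 (hGcov y hzy)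
      refine mem_iUnion₂.2 ⟨w, Finset.mem_biUnion.2 ⟨y, hy, hw⟩, ?_⟩
      rwa [pow_succ, ← div_div]

/-- If `B(x, s)` is covered by finitely many balls of radius `e` with `s + 3 * e ≤ r`, then the
union of the sets separating the scales `e` and `2 * e` at the relevant centres separates
`B(x, s)` from the complement of the closure of `B(x, r)`. -/
theorem UWSWith.exists_separating_of_cover {X : Type*} [MetricSpace X] {C : ℝ} (hC : 0 ≤ C)
    (huws : UWSWith X C) {x : X} {s r e : ℝ} (he : 0 < e) (hsr : s + 3 * e ≤ r) {F : Finset X}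
    (hF : ball x s ⊆ ⋃ y ∈ F, ball y e) :
    ∃ P : Finset X, (P : Set X) ⊆ ball x r ∧ (P.card : ℝ) ≤ F.card * C ∧
      ∀ y : X, y ∉ P →
        ¬ ((connectedComponentIn ((P : Set X))ᶜ y ∩ ball x s).Nonempty ∧
           (connectedComponentIn ((P : Set X))ᶜ y ∩ (closure (ball x r))ᶜ).Nonempty) := by
  classical
  choose Q hQ hQcard hQsep using fun y => huws y (2 * e) (by positivity)
  set G := F.filter fun y => dist y x < s + e
  have hGF : G.card ≤ F.card := Finset.card_filter_le _ _
  refine ⟨G.biUnion Q, fun p hp => ?_, ?_, ?_⟩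
  · obtain ⟨y, hy, hpy⟩ := Finset.mem_biUnion.1 (Finset.mem_coe.1 hp)
    have hyx := (Finset.mem_filter.1 hy).2
    have hpdist := mem_ball.1 (hQ y hpy)
    have := dist_triangle p y x
    exact mem_ball.2 (by linarith)
  · calc ((G.biUnion Q).card : ℝ) ≤ ∑ y ∈ G, ((Q y).card : ℝ) := by
          exact_mod_cast Finset.card_biUnion_le
      _ ≤ G.card * C := by
          simpa using Finset.sum_le_card_nsmul G _ C fun y _ => hQcard y
      _ ≤ F.card * C := by gcongr
  · rintro z hz ⟨⟨a, haz, hax⟩, ⟨b, hbz, hbx⟩⟩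
    obtain ⟨y, hyF, hay⟩ := mem_iUnion₂.1 (hF hax)
    rw [mem_ball] at hax hay
    have hyG : y ∈ G := by
      refine Finset.mem_filter.2 ⟨hyF, ?_⟩
      have := dist_triangle_left y x a
      linarith
    have hsub : Q y ⊆ G.biUnion Q := Finset.subset_biUnion_of_mem Q hyG
    have hcomp := connectedComponentIn_mono z
      (compl_subset_compl.2 (Finset.coe_subset.2 hsub))
    refine hQsep y z (fun h => hz (hsub h)) ⟨⟨a, hcomp haz, ?_⟩, ⟨b, hcomp hbz, fun hb => ?_⟩⟩
    · rw [mem_ball]; linarith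
    · have hby := mem_closedBall.1 (closure_ball_subset_closedBall hb)
      refine hbx (subset_closure (mem_ball.2 ?_))
      have h₁ := dist_triangle b y x
      have h₂ := dist_triangle_left y x a
      linarith

/-- The UWS condition self-improves to all pairs of scales `0 < s < r ≤ diam X`:
there is a function `C' : (0,1) → ℝ₊` bounding the number of points needed to separate
`B(x,s)` from `X \ closure (B(x,r))`, in terms of the ratio `s/r` only. -/
theorem uws_two_scales (X : Type*) [MetricSpace X] [CompactSpace X] [ConnectedSpace X]
    (N : ℕ) (hdbl : DoublingWith X N) (C : ℝ) (hC : 1 ≤ C) (huws : UWSWith X C) :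
    ∃ C' : ℝ → ℝ, (∀ t, 0 < t → t < 1 → 0 < C' t) ∧
      ∀ (x : X) (s r : ℝ), 0 < s → s < r → r ≤ Metric.diam (Set.univ : Set X) →
        ∃ P : Finset X, (P : Set X) ⊆ Metric.ball x r ∧ (P.card : ℝ) ≤ C' (s / r) ∧
          ∀ y : X, y ∉ P →
            ¬ ((connectedComponentIn ((P : Set X))ᶜ y ∩ Metric.ball x s).Nonempty ∧
               (connectedComponentIn ((P : Set X))ᶜ y ∩
                 (closure (Metric.ball x r))ᶜ).Nonempty) := by
  have hk : ∀ t : ℝ, ∃ k : ℕ, t < 1 → 3 * t < 2 ^ k * (1 - t) := fun t => by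
    obtain ⟨k, hk⟩ := pow_unbounded_of_one_lt (3 * t / (1 - t)) (one_lt_two (α := ℝ))
    exact ⟨k, fun ht => (div_lt_iff₀ (sub_pos.2 ht)).1 hk⟩
  choose k hk using hk
  refine ⟨fun t => (N : ℝ) ^ k t * C + 1, fun t _ _ => by positivity, fun x s r hs hsr _ => ?_⟩
  have hr : 0 < r := hs.trans hsr
  obtain ⟨F, hFcard, hF⟩ := hdbl.exists_cover_pow x s (k (s / r))
  have hscale : s + 3 * (s / 2 ^ k (s / r)) ≤ r := by
    have h := hk (s / r) ((div_lt_one hr).2 hsr)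
    have h2 : (0 : ℝ) < 2 ^ k (s / r) := by positivity
    have h3 : 3 * s < 2 ^ k (s / r) * (r - s) := by
      calc 3 * s = 3 * (s / r) * r := by field_simp
        _ < 2 ^ k (s / r) * (1 - s / r) * r := by gcongr
        _ = 2 ^ k (s / r) * (r - s) := by
          rw [mul_assoc, sub_mul, one_mul, div_mul_cancel₀ _ hr.ne']
    have h4 : 3 * s / 2 ^ k (s / r) < r - s := (div_lt_iff₀' h2).2 h3
    rw [← mul_div_assoc]
    linarith
  obtain ⟨P, hP, hPcard, hsep⟩ :=
    huws.exists_separating_of_cover (by positivity) (by positivity) hscale hF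
  refine ⟨P, hP, hPcard.trans ?_, hsep⟩
  have hFcardReal : (F.card : ℝ) ≤ (N : ℝ) ^ k (s / r) := by exact_mod_cast hFcard
  have : (F.card : ℝ) * C ≤ (N : ℝ) ^ k (s / r) * C := by gcongr
  linarith
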